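/- arXiv:1402.6973 — 2 statements merged into one kernel-verified Lean document; each statement's English description precedes it below -/
import Mathlib

section
/- In any execution of algorithm Greedy on a d-uniform arrival sequence where the adversary's schedule O is feasible, for every index ℓ and every time t at which there is no eligible packet with index at least ℓ in Greedy's buffer, Greedy has by time t delivered at least one packet with index at least ℓ for every two adversary packets with index at least ℓ that became eligible and were subsequently dropped by Greedy. -/
/-! ## Model: d-uniform bounded-delay goodput ({\sc d-uBDG}) instances -/

/-- An arrival sequence for the `d`-uniform bounded-delay goodput problem:
`n` frames, each consisting of `k` unit-size packets; packet `(f, ℓ)` (the `ℓ`-th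
packet of frame `f`, `0`-indexed) arrives at time `a f ℓ`, arrival times are
nondecreasing within each frame, and every packet has deadline `a f ℓ + d`. -/
structure ArrivalSeq (n k d : ℕ) where
  a : Fin n → Fin k → ℕ
  mono : ∀ f : Fin n, Monotone (a f)

namespace ArrivalSeq

variable {n k d : ℕ}

/-- At most `b` packets arrive in any single time slot (maximum burst size `b`). -/
def BurstBound (A : ArrivalSeq n k d) (b : ℕ) : Prop :=
  ∀ t : ℕ, Set.ncard {p : Fin n × Fin k | A.a p.1 p.2 = t} ≤ b

/-- A feasible schedule: at most one packet is delivered per time slot, every packet is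
delivered at most once, and every delivered packet is delivered between its arrival
time and its deadline. -/
def IsSchedule (A : ArrivalSeq n k d) (S : ℕ → Option (Fin n × Fin k)) : Prop :=
  (∀ (p : Fin n × Fin k) (t t' : ℕ), S t = some p → S t' = some p → t = t') ∧
  ∀ (p : Fin n × Fin k) (t : ℕ), S t = some p →
    A.a p.1 p.2 ≤ t ∧ t ≤ A.a p.1 p.2 + d

/-- A frame is successful under schedule `S` if all of its packets are delivered. -/
def Successful (A : ArrivalSeq n k d) (S : ℕ → Option (Fin n × Fin k)) (f : Fin n) : Prop :=
  ∀ ℓ : Fin k, ∃ t : ℕ, S t = some (f, ℓ)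

/-- The goodput of a schedule: the number of successful frames. -/
noncomputable def Goodput (A : ArrivalSeq n k d) (S : ℕ → Option (Fin n × Fin k)) : ℕ :=
  Set.ncard {f : Fin n | A.Successful S f}

/-- `S` is an optimal (feasible) schedule for `A`. -/
def IsOptimal (A : ArrivalSeq n k d) (S : ℕ → Option (Fin n × Fin k)) : Prop :=
  A.IsSchedule S ∧
    ∀ S' : ℕ → Option (Fin n × Fin k), A.IsSchedule S' → A.Goodput S' ≤ A.Goodput S

end ArrivalSeq

/-! ## Executions of scheduling algorithms -/

/-- A trace of the execution of a scheduling algorithm on the arrival sequence `A`: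
`deliver t` is the packet delivered at the scheduling substep of slot `t` (if any), and
`dropTime p` is the slot at which packet `p` is dropped by the algorithm (if ever). -/
structure AlgExec {n k d : ℕ} (A : ArrivalSeq n k d) where
  deliver : ℕ → Option (Fin n × Fin k)
  dropTime : Fin n × Fin k → Option ℕ

namespace AlgExec

variable {n k d : ℕ} {A : ArrivalSeq n k d}

/-- packet `p` is delivered at some time `≤ t`. -/
def DeliveredBy (E : AlgExec A) (p : Fin n × Fin k) (t : ℕ) : Prop :=
  ∃ s ≤ t, E.deliver s = some p

/-- packet `p` is delivered at some point of the execution. -/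
def Delivered (E : AlgExec A) (p : Fin n × Fin k) : Prop :=
  ∃ s : ℕ, E.deliver s = some p

/-- packet `p` is dropped at some time `< t`. -/
def DroppedBefore (E : AlgExec A) (p : Fin n × Fin k) (t : ℕ) : Prop :=
  ∃ s < t, E.dropTime p = some s

/-- packet `p` is pending at (the scheduling substep of) slot `t`: it has arrived, its
deadline has not passed, and it has been neither delivered nor dropped before `t`. -/
def Pending (E : AlgExec A) (p : Fin n × Fin k) (t : ℕ) : Prop :=
  A.a p.1 p.2 ≤ t ∧ t ≤ A.a p.1 p.2 + d ∧
    ¬ (∃ s < t, E.deliver s = some p) ∧ ¬ E.DroppedBefore p t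

/-- frame `f` is alive at time `t`: none of its packets has been dropped before `t`,
nor has expired (i.e., reached its deadline undelivered) before `t`. -/
def Alive (E : AlgExec A) (f : Fin n) (t : ℕ) : Prop :=
  ∀ ℓ : Fin k, ¬ E.DroppedBefore (f, ℓ) t ∧
    (A.a f ℓ + d < t → E.DeliveredBy (f, ℓ) (A.a f ℓ + d))

/-- frame `f` has some pending packet at time `t`. -/
def HasPending (E : AlgExec A) (f : Fin n) (t : ℕ) : Prop :=
  ∃ ℓ : Fin k, E.Pending (f, ℓ) t

/-- `I_t(f)`: the index of the first (minimal-index) pending packet of `f` at time `t`. -/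
noncomputable def Iidx (E : AlgExec A) (t : ℕ) (f : Fin n) : ℕ :=
  sInf {ℓ : ℕ | ∃ h : ℓ < k, E.Pending (f, ⟨ℓ, h⟩) t}

/-- frame `f` is completed by the execution: all of its packets are delivered. -/
def Completed (E : AlgExec A) (f : Fin n) : Prop :=
  ∀ ℓ : Fin k, E.Delivered (f, ℓ)

/-- `w f`: the number of packets of frame `f` delivered by the execution. -/
noncomputable def w (E : AlgExec A) (f : Fin n) : ℕ :=
  Set.ncard {ℓ : Fin k | E.Delivered (f, ℓ)}

/-- the first time at which some packet of `f` is dropped. -/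
noncomputable def dropT (E : AlgExec A) (f : Fin n) : ℕ :=
  sInf {t : ℕ | ∃ ℓ : Fin k, E.dropTime (f, ℓ) = some t}

/-- the index of the first packet of `f` to be dropped (the minimal index among the
packets of `f` dropped at the first drop time of `f`). -/
noncomputable def firstDropIdx (E : AlgExec A) (f : Fin n) : ℕ :=
  sInf {ℓ : ℕ | ∃ h : ℓ < k, E.dropTime (f, ⟨ℓ, h⟩) = some (E.dropT f)}

/-! ### The algorithm `ProactiveGreedy` -/

/-- The defining conditions of an execution of `ProactiveGreedy` (with arbitrary
tie-breaking): at every slot `t`,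
(i) a delivered packet is the first pending packet of an alive frame maximizing
`I_t` among all alive frames with pending packets;
(ii) a packet is delivered whenever some alive frame has a pending packet; and
(iii) a packet is dropped at `t` exactly when it is pending at `t` and either its
frame is not alive at `t` (line 1 of the algorithm) or the packet delivered at `t`
belongs to a different frame (line 4: packets of all non-chosen frames are dropped). -/
def PGValid (E : AlgExec A) : Prop :=
  (∀ (t : ℕ) (f : Fin n) (ℓ : Fin k), E.deliver t = some (f, ℓ) →
      E.Alive f t ∧ E.Pending (f, ℓ) t ∧ (ℓ : ℕ) = E.Iidx t f ∧
      ∀ f' : Fin n, E.Alive f' t → E.HasPending f' t → E.Iidx t f' ≤ E.Iidx t f) ∧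
  (∀ t : ℕ, (∃ f : Fin n, E.Alive f t ∧ E.HasPending f t) → E.deliver t ≠ none) ∧
  (∀ (p : Fin n × Fin k) (t : ℕ), E.dropTime p = some t ↔
      E.Pending p t ∧
        (¬ E.Alive p.1 t ∨ ∃ q : Fin n × Fin k, E.deliver t = some q ∧ q.1 ≠ p.1))

/-! ### The mapping `φ` used in the analysis of `ProactiveGreedy` -/

open Classical in
/-- The frame onto which a frame `f ∉ F_PG` is *directly* mapped by the mapping `φ`:
the frame whose packet is delivered at the time `t_f` at which the first packet of `f`
is dropped.  Frames of `F_PG` are mapped to themselves. -/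
noncomputable def phiNext (E : AlgExec A) (f : Fin n) : Fin n :=
  if E.Completed f then f
  else
    match E.deliver (E.dropT f) with
    | some q => q.1
    | none => f

/-- the frame onto which `f` is mapped after `j` successive (re-)mappings of `φ`. -/
noncomputable def phiChain (E : AlgExec A) (f : Fin n) (j : ℕ) : Fin n :=
  (E.phiNext)^[j] f

/-- frame `f` is *directly* mapped by `φ` via the packet `q` (of the frame `q.1`):
`q` is the packet delivered at the time the first packet of `f` is dropped. -/
def PhiDirectVia (E : AlgExec A) (f : Fin n) (q : Fin n × Fin k) : Prop :=
  ¬ E.Completed f ∧ E.deliver (E.dropT f) = some q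

/-- frame `f` is mapped (directly or indirectly, i.e. after re-mappings) by `φ`
via the packet `q`; `M(q)` is the set of frames mapped via `q`. -/
def PhiMappedVia (E : AlgExec A) (f : Fin n) (q : Fin n × Fin k) : Prop :=
  ∃ j : ℕ, E.PhiDirectVia (E.phiChain f j) q

/-! ### The algorithm `Greedy` -/

/-- packet `p` is still pending after the scheduling substep of slot `t`. -/
def PendingAfter (E : AlgExec A) (p : Fin n × Fin k) (t : ℕ) : Prop :=
  E.Pending p t ∧ E.deliver t ≠ some p

/-- frame `f` is infeasible after the scheduling substep of slot `t`: for some pending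
packet `(f, ℓ)` the pending packets of `f` of index `≤ ℓ` cannot all be scheduled in
the slots `t+1, …, a f ℓ + d`. -/
noncomputable def Infeasible (E : AlgExec A) (f : Fin n) (t : ℕ) : Prop :=
  ∃ ℓ : Fin k, E.PendingAfter (f, ℓ) t ∧
    A.a f ℓ + d < t + Set.ncard {j : Fin k | j ≤ ℓ ∧ E.PendingAfter (f, j) t}

/-- The defining conditions of an execution of `Greedy` (with arbitrary tie-breaking):
at every slot `t`,
(i) a delivered packet is the first pending packet of an alive frame maximizing `I_t`
among all alive frames with pending packets;
(ii) a packet is delivered whenever some alive frame has a pending packet; and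
(iii) a packet is dropped at `t` exactly when it is pending at `t`, it is not the
packet delivered at `t`, and either its frame is not alive at `t`, or its residual
slack at `t` is `0` (it expires), or its frame becomes infeasible at `t` (cleanup). -/
noncomputable def GreedyValid (E : AlgExec A) : Prop :=
  (∀ (t : ℕ) (f : Fin n) (ℓ : Fin k), E.deliver t = some (f, ℓ) →
      E.Alive f t ∧ E.Pending (f, ℓ) t ∧ (ℓ : ℕ) = E.Iidx t f ∧
      ∀ f' : Fin n, E.Alive f' t → E.HasPending f' t → E.Iidx t f' ≤ E.Iidx t f) ∧
  (∀ t : ℕ, (∃ f : Fin n, E.Alive f t ∧ E.HasPending f t) → E.deliver t ≠ none) ∧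
  (∀ (p : Fin n × Fin k) (t : ℕ), E.dropTime p = some t ↔
      E.Pending p t ∧ E.deliver t ≠ some p ∧
        (¬ E.Alive p.1 t ∨ A.a p.1 p.2 + d = t ∨ E.Infeasible p.1 t))

/-- packet `p = (f, ℓ)` is *eligible* at time `t`: it is in the buffer (pending) at
`t`, its frame is alive at `t`, and `ℓ = I_t(f)`. -/
def Eligible (E : AlgExec A) (p : Fin n × Fin k) (t : ℕ) : Prop :=
  E.Alive p.1 t ∧ E.Pending p t ∧ (p.2 : ℕ) = E.Iidx t p.1

/-! ### The mapping `ψ` used in the analysis of `Greedy` -/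

/-- The mapping `ψ` used in the analysis of `Greedy`, relative to the set `O` of frames
of a fixed optimal schedule and the maximum burst size `b`.  Every frame of
`F_G` (completed by `Greedy`) is mapped to itself (encoded as `dm f = none`); every
frame `f ∉ F_G` is directly mapped via a packet `q` delivered by `Greedy` no later than
the drop time `t_f` of `f`, whose index is at least the index of the first dropped
packet of `f`; every delivered packet has at most `2` frames of `O` and at most `b`
frames in total directly mapped to it. -/
structure PsiMapping (E : AlgExec A) (O : Set (Fin n)) (b : ℕ) where
  dm : Fin n → Option (Fin n × Fin k)
  mapsSelf : ∀ f : Fin n, E.Completed f → dm f = none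
  mapsAll : ∀ f : Fin n, ¬ E.Completed f → ∃ q : Fin n × Fin k, dm f = some q
  viaValid : ∀ (f : Fin n) (q : Fin n × Fin k), dm f = some q →
    E.firstDropIdx f ≤ (q.2 : ℕ) ∧ ∃ t ≤ E.dropT f, E.deliver t = some q
  capO : ∀ q : Fin n × Fin k, Set.ncard {f : Fin n | f ∈ O ∧ dm f = some q} ≤ 2
  capAll : ∀ q : Fin n × Fin k, Set.ncard {f : Fin n | dm f = some q} ≤ b

namespace PsiMapping

variable {E : AlgExec A} {O : Set (Fin n)} {b : ℕ}

/-- the frame onto which `f` is directly mapped by `ψ` (itself, if `f ∈ F_G`). -/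
def next (M : PsiMapping E O b) (f : Fin n) : Fin n :=
  match M.dm f with
  | some q => q.1
  | none => f

/-- the frame onto which `f` is mapped after `j` successive (re-)mappings of `ψ`. -/
def chain (M : PsiMapping E O b) (f : Fin n) (j : ℕ) : Fin n :=
  (M.next)^[j] f

/-- frame `f` is mapped (directly or indirectly) by `ψ` via the packet `q`;
`M(q)` is the set of frames mapped via `q`. -/
def MappedVia (M : PsiMapping E O b) (f : Fin n) (q : Fin n × Fin k) : Prop :=
  ∃ j : ℕ, M.dm (M.chain f j) = some q

end PsiMapping

end AlgExec

/-!
Call a slot busy if some packet of index at least `ℓ` is eligible in it; `Greedy` uses every busy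
slot to deliver a packet of index at least `ℓ`. A frame loses at most one eligible packet, namely
its first pending one at the moment it dies, so it suffices to charge each lost frame of `O` to a
busy slot in such a way that each busy slot receives at most two frames. Let the lost packet `p` be
dropped at `t`. If all slots from the arrival of `p` to `t` are busy, charge a slot among them in
which the adversary serves the frame of `p`: one exists because otherwise the adversary could not
meet the deadlines that `Greedy` cannot meet. Otherwise let `x < t` be the last of these slots that
is not busy. The first pending packet of the frame at `x` has index less than `ℓ`, and it can only
leave the buffer in slot `x` itself; charge the busy slot `x + 1`. Each slot is thus charged at most
once through the adversary's delivery in it and at most once through `Greedy`'s delivery in the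
preceding slot.
-/

lemma ncard_le_ncard_of_leftUnique {α β : Type*} {r : α → β → Prop} (hr : Relator.LeftUnique r)
    {s : Set α} {t : Set β} (ht : t.Finite) (h : ∀ a ∈ s, ∃ b ∈ t, r a b) :
    s.ncard ≤ t.ncard := by
  rcases s.eq_empty_or_nonempty with rfl | ⟨a, ha⟩
  · simp
  · have : Nonempty β := ⟨(h a ha).choose⟩
    choose! g hgt hgr using h
    refine Set.ncard_le_ncard_of_injOn g hgt (fun a ha b hb hab ↦ hr (hgr a ha) ?_) ht
    exact hab ▸ hgr b hb

lemma exists_last_not_of_le {P : ℕ → Prop} {s t : ℕ} (hst : s ≤ t) (hs : ¬ P s) (ht : P t) :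
    ∃ x, s ≤ x ∧ x < t ∧ ¬ P x ∧ ∀ y, x < y → y ≤ t → P y := by
  induction t, hst using Nat.le_induction with
  | base => exact absurd ht hs
  | succ t hst ih =>
    by_cases hPt : P t
    · obtain ⟨x, hsx, hxt, hx, hP⟩ := ih hPt
      refine ⟨x, hsx, by omega, hx, fun y hxy hyt ↦ ?_⟩
      rcases hyt.eq_or_lt with rfl | hyt
      · exact ht
      · exact hP y hxy (by omega)
    · exact ⟨t, hst, by omega, hPt, fun y hty hyt ↦ (show y = t + 1 by omega) ▸ ht⟩

/-- Frame `f` is served by the schedule `S` in slot `t`: `S` delivers one of its packets. -/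
def Serves {n k : ℕ} (S : ℕ → Option (Fin n × Fin k)) (f : Fin n) (t : ℕ) : Prop :=
  ∃ j : Fin k, S t = some (f, j)

lemma Serves.leftUnique {n k : ℕ} (S : ℕ → Option (Fin n × Fin k)) :
    Relator.LeftUnique (Serves S) := by
  rintro f g t ⟨i, hi⟩ ⟨j, hj⟩
  simpa using congrArg (Option.map Prod.fst) (hi.symm.trans hj)

namespace AlgExec

variable {n k d : ℕ} {A : ArrivalSeq n k d} {E : AlgExec A} {S : ℕ → Option (Fin n × Fin k)}
  {f : Fin n} {j : Fin k} {p q : Fin n × Fin k} {ℓ s t x : ℕ}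

lemma Pending.of_le (h : E.Pending p t) (hst : s ≤ t) (ha : A.a p.1 p.2 ≤ s) :
    E.Pending p s :=
  ⟨ha, hst.trans h.2.1, fun ⟨x, hx, hd⟩ ↦ h.2.2.1 ⟨x, hx.trans_le hst, hd⟩,
    fun ⟨x, hx, hd⟩ ↦ h.2.2.2 ⟨x, hx.trans_le hst, hd⟩⟩

lemma Alive.of_le (h : E.Alive f t) (hst : s ≤ t) : E.Alive f s := fun j ↦
  ⟨fun ⟨x, hx, hd⟩ ↦ (h j).1 ⟨x, hx.trans_le hst, hd⟩, fun hs ↦ (h j).2 (hs.trans_le hst)⟩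

lemma Alive.le_dropTime (h : E.Alive p.1 t) (hd : E.dropTime p = some s) : t ≤ s :=
  not_lt.1 fun hst ↦ (h p.2).1 ⟨s, hst, hd⟩

lemma Alive.pending_of_forall_deliver_ne (h : E.Alive p.1 t) (ha : A.a p.1 p.2 ≤ t)
    (hd : ∀ x < t, E.deliver x ≠ some p) : E.Pending p t := by
  refine ⟨ha, ?_, fun ⟨x, hx, hdx⟩ ↦ hd x hx hdx, (h p.2).1⟩
  by_contra! hexp
  obtain ⟨x, hx, hdx⟩ := (h p.2).2 hexp
  exact hd x (hx.trans_lt hexp) hdx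

lemma Iidx_le_of_pending (h : E.Pending (f, j) t) : E.Iidx t f ≤ j :=
  Nat.sInf_le ⟨j.2, h⟩

lemma HasPending.exists_eq_Iidx (h : E.HasPending f t) :
    ∃ j : Fin k, E.Pending (f, j) t ∧ (j : ℕ) = E.Iidx t f := by
  obtain ⟨i, hi⟩ := h
  obtain ⟨hlt, hpend⟩ :=
    Nat.sInf_mem (s := {ℓ : ℕ | ∃ h : ℓ < k, E.Pending (f, ⟨ℓ, h⟩) t}) ⟨i, i.2, hi⟩
  exact ⟨⟨_, hlt⟩, hpend, rfl⟩

lemma Alive.exists_eligible (h : E.Alive f t) (hp : E.HasPending f t) :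
    ∃ j : Fin k, E.Eligible (f, j) t :=
  let ⟨j, hj, hI⟩ := hp.exists_eq_Iidx
  ⟨j, h, hj, hI⟩

lemma Eligible.le_of_pending (h : E.Eligible p t) (hj : E.Pending (p.1, j) t) : p.2 ≤ j :=
  Fin.le_def.2 (h.2.2.trans_le (Iidx_le_of_pending hj))

lemma Eligible.of_forall_le (ha : E.Alive p.1 t) (hp : E.Pending p t)
    (hmin : ∀ j, E.Pending (p.1, j) t → p.2 ≤ j) : E.Eligible p t := by
  obtain ⟨j, hj, hI⟩ := HasPending.exists_eq_Iidx ⟨p.2, hp⟩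
  exact ⟨ha, hp, (hI ▸ Fin.le_def.1 (hmin j hj)).antisymm (Iidx_le_of_pending hp)⟩

lemma Eligible.eq_of_fst_eq (hp : E.Eligible p t) (hq : E.Eligible q t) (h : p.1 = q.1) :
    p = q :=
  Prod.ext h (Fin.ext (hp.2.2.trans (h ▸ hq.2.2.symm)))

/-- A slot is busy for the index `ℓ` if some packet of index at least `ℓ` is eligible in it. These
are the slots to which losses of the adversary are charged. -/
def Busy (E : AlgExec A) (ℓ t : ℕ) : Prop :=
  ∃ p : Fin n × Fin k, ℓ ≤ (p.2 : ℕ) ∧ E.Eligible p t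

/-- The slots up to `t` that are busy for the index `ℓ`. -/
def busySlots (E : AlgExec A) (ℓ t : ℕ) : Set ℕ :=
  {x | x ≤ t ∧ E.Busy ℓ x}

lemma finite_busySlots (E : AlgExec A) (ℓ t : ℕ) : (E.busySlots ℓ t).Finite :=
  (Set.finite_Iic t).subset fun _ hx ↦ hx.1

namespace GreedyValid

lemma eq_of_deliver_eq (hE : E.GreedyValid) (hs : E.deliver s = some p)
    (ht : E.deliver t = some p) : s = t := by
  have not_lt_of_deliver {s t : ℕ} (hs : E.deliver s = some p) (ht : E.deliver t = some p) :
      ¬ s < t := fun hst ↦ (hE.1 t _ _ ht).2.1.2.2.1 ⟨s, hst, hs⟩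
  exact le_antisymm (not_lt.1 (not_lt_of_deliver ht hs)) (not_lt.1 (not_lt_of_deliver hs ht))

lemma exists_deliver_of_busy (hE : E.GreedyValid) (h : E.Busy ℓ t) :
    ∃ q : Fin n × Fin k, ℓ ≤ (q.2 : ℕ) ∧ E.deliver t = some q := by
  obtain ⟨p, hℓ, halive, hpend, hI⟩ := h
  obtain ⟨q, hq⟩ := Option.ne_none_iff_exists'.1 (hE.2.1 t ⟨p.1, halive, p.2, hpend⟩)
  obtain ⟨-, -, hqI, hmax⟩ := hE.1 t q.1 q.2 hq
  have hpq := hmax p.1 halive ⟨p.2, hpend⟩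
  exact ⟨q, by omega, hq⟩

lemma ncard_busySlots_le (hE : E.GreedyValid) (ℓ t : ℕ) :
    (E.busySlots ℓ t).ncard ≤
      {p : Fin n × Fin k | ℓ ≤ (p.2 : ℕ) ∧ ∃ s ≤ t, E.deliver s = some p}.ncard := by
  refine ncard_le_ncard_of_leftUnique (r := fun s p ↦ E.deliver s = some p)
    (fun _ _ _ ↦ hE.eq_of_deliver_eq) (Set.toFinite _) fun x ⟨hxt, hx⟩ ↦ ?_
  obtain ⟨q, hℓ, hq⟩ := hE.exists_deliver_of_busy hx
  exact ⟨q, ⟨hℓ, x, hxt, hq⟩, hq⟩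

lemma alive_succ (hE : E.GreedyValid) (h : E.Alive f t)
    (hdrop : ∀ j, E.dropTime (f, j) ≠ some t) : E.Alive f (t + 1) := by
  intro j
  refine ⟨fun ⟨x, hx, hd⟩ ↦ ?_, fun hexp ↦ ?_⟩
  · have hxt : x = t := (Nat.le_of_lt_succ hx).antisymm (h.le_dropTime hd)
    exact hdrop j (hxt ▸ hd)
  · rcases (Nat.le_of_lt_succ hexp).lt_or_eq with hlt | heq
    · exact (h j).2 hlt
    · by_contra hnd
      have hne : ∀ x ≤ t, E.deliver x ≠ some (f, j) := fun x hx hd ↦ hnd ⟨x, heq ▸ hx, hd⟩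
      have hpend : E.Pending (f, j) t :=
        Alive.pending_of_forall_deliver_ne h (Nat.le_add_right _ d |>.trans heq.le)
          fun x hx ↦ hne x hx.le
      exact hdrop j ((hE.2.2 _ t).2 ⟨hpend, hne t le_rfl, .inr (.inl heq)⟩)

lemma dropTime_ne_of_pending_succ (hE : E.GreedyValid) (h : E.Eligible p t)
    (hp : E.Pending p (t + 1)) (j : Fin k) : E.dropTime (p.1, j) ≠ some t := by
  intro hdrop
  obtain ⟨hj, -, hdead | hexp | hinf⟩ := (hE.2.2 _ t).1 hdrop
  · exact hdead h.1
  · have hmono : A.a p.1 p.2 ≤ A.a p.1 j := A.mono p.1 (h.le_of_pending hj)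
    have hdeadline := hp.2.1
    dsimp only at hexp
    omega
  · have hnd : E.deliver t ≠ some p := fun hd ↦ hp.2.2.1 ⟨t, t.lt_succ_self, hd⟩
    exact hp.2.2.2 ⟨t, t.lt_succ_self, (hE.2.2 p t).2 ⟨h.2.1, hnd, .inr (.inr hinf)⟩⟩

lemma eligible_succ (hE : E.GreedyValid) (h : E.Eligible p t) (hp : E.Pending p (t + 1)) :
    E.Eligible p (t + 1) := by
  refine .of_forall_le (hE.alive_succ h.1 (hE.dropTime_ne_of_pending_succ h hp)) hp fun j hj ↦ ?_
  -- A packet of smaller index arrives no later than `p`, so it was pending at `t` already.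
  by_contra! hlt
  have hat : A.a p.1 j ≤ t := (A.mono p.1 hlt.le).trans h.2.1.1
  exact hlt.not_ge (h.le_of_pending (hj.of_le t.le_succ hat))

lemma eligible_of_le (hE : E.GreedyValid) (h : E.Eligible p s) (hst : s ≤ t)
    (hp : E.Pending p t) : E.Eligible p t := by
  induction t, hst using Nat.le_induction with
  | base => exact h
  | succ t hst ih => exact hE.eligible_succ (ih (hp.of_le t.le_succ (h.2.1.1.trans hst))) hp

end GreedyValid

/-- Packet `p` is dropped in slot `t` while it is eligible. In an execution of `Greedy` this is what
becomes of every dropped packet that was eligible at some point. -/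
def DroppedEligible (E : AlgExec A) (p : Fin n × Fin k) (t : ℕ) : Prop :=
  E.dropTime p = some t ∧ E.Eligible p t

lemma GreedyValid.droppedEligible (hE : E.GreedyValid) (hdrop : E.dropTime p = some t)
    (hst : s ≤ t) (h : E.Eligible p s) : E.DroppedEligible p t :=
  ⟨hdrop, hE.eligible_of_le h hst ((hE.2.2 p t).1 hdrop).1⟩

lemma DroppedEligible.eq_of_fst_eq (hp : E.DroppedEligible p s) (hq : E.DroppedEligible q t)
    (h : p.1 = q.1) : p = q := by
  have hst : s = t :=
    ((h ▸ hp.2.1 : E.Alive q.1 s).le_dropTime hq.1).antisymm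
      ((h ▸ hq.2.1 : E.Alive p.1 t).le_dropTime hp.1)
  exact hp.2.eq_of_fst_eq (hst ▸ hq.2) h

/-- The packets of index at least `ℓ`, of frames successful under the schedule `S`, that are dropped
by time `t` while eligible. -/
def adversaryLosses (E : AlgExec A) (S : ℕ → Option (Fin n × Fin k)) (ℓ t : ℕ) :
    Set (Fin n × Fin k) :=
  {p | A.Successful S p.1 ∧ ℓ ≤ (p.2 : ℕ) ∧ ∃ s ≤ t, E.DroppedEligible p s}

lemma injOn_fst_adversaryLosses (E : AlgExec A) (S : ℕ → Option (Fin n × Fin k)) (ℓ t : ℕ) :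
    Set.InjOn Prod.fst (E.adversaryLosses S ℓ t) := by
  rintro p ⟨-, -, s, -, hp⟩ q ⟨-, -, s', -, hq⟩ hpq
  exact hp.eq_of_fst_eq hq hpq

lemma Infeasible.exists_le_eq_some (hS : A.IsSchedule S) (hf : A.Successful S f)
    (h : E.Infeasible f t) : ∃ j, E.Pending (f, j) t ∧ ∃ x ≤ t, S x = some (f, j) := by
  obtain ⟨i, hi, hlt⟩ := h
  by_contra! hlate
  choose T hT using hf
  have hmaps : ∀ j ∈ {j : Fin k | j ≤ i ∧ E.PendingAfter (f, j) t},
      T j ∈ Set.Ioc t (A.a f i + d) := fun j ⟨hji, hj⟩ ↦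
    ⟨not_le.1 fun hTt ↦ hlate j hj.1 (T j) hTt (hT j),
      (hS.2 _ _ (hT j)).2.trans (Nat.add_le_add_right (A.mono f hji) d)⟩
  have hinj : Function.Injective T := by
    intro j j' hjj'
    have hsame : some (f, j) = some (f, j') := by rw [← hT j, ← hT j', hjj']
    simpa using hsame
  have hcard := Set.ncard_le_ncard_of_injOn T hmaps hinj.injOn (Set.finite_Ioc _ _)
  rw [← Finset.coe_Ioc, Set.ncard_coe_finset, Nat.card_Ioc] at hcard
  have hdeadline : t ≤ A.a f i + d := hi.1.2.1
  omega

namespace GreedyValid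

lemma exists_serves_of_droppedEligible (hE : E.GreedyValid) (hS : A.IsSchedule S)
    (hsucc : A.Successful S p.1) (h : E.DroppedEligible p t) :
    ∃ x, A.a p.1 p.2 ≤ x ∧ x ≤ t ∧ Serves S p.1 x := by
  obtain ⟨-, -, hdead | hexp | hinf⟩ := (hE.2.2 p t).1 h.1
  · exact absurd h.2.1 hdead
  · obtain ⟨x, hx⟩ := hsucc p.2
    obtain ⟨hax, hxd⟩ := hS.2 _ _ hx
    exact ⟨x, hax, hexp ▸ hxd, p.2, hx⟩
  · obtain ⟨j, hj, x, hxt, hx⟩ := hinf.exists_le_eq_some hS hsucc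
    exact ⟨x, (A.mono p.1 (h.2.le_of_pending hj)).trans (hS.2 _ _ hx).1, hxt, j, hx⟩

lemma serves_of_not_busy (hE : E.GreedyValid) (hℓ : ℓ ≤ (p.2 : ℕ)) (hp : E.Eligible p t)
    (hax : A.a p.1 p.2 ≤ x) (hxt : x < t) (hx : ¬ E.Busy ℓ x)
    (hbusy : ∀ y, x < y → y ≤ t → E.Busy ℓ y) : Serves E.deliver p.1 x := by
  obtain ⟨j, hj⟩ := (hp.1.of_le hxt.le).exists_eligible ⟨p.2, hp.2.1.of_le hxt.le hax⟩
  have hjℓ : (j : ℕ) < ℓ := not_le.1 fun hℓj ↦ hx ⟨(p.1, j), hℓj, hj⟩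
  by_contra hno
  have hnd : ∀ y < t, E.deliver y ≠ some (p.1, j) := by
    intro y hyt hy
    rcases lt_trichotomy y x with hyx | rfl | hxy
    · exact hj.2.1.2.2.1 ⟨y, hyx, hy⟩
    · exact hno ⟨j, hy⟩
    · obtain ⟨q, hℓq, hq⟩ := hE.exists_deliver_of_busy (hbusy y hxy hyt.le)
      obtain rfl : (p.1, j) = q := Option.some.inj (hy.symm.trans hq)
      exact hjℓ.not_ge hℓq
  have hjt : E.Pending (p.1, j) t :=
    Alive.pending_of_forall_deliver_ne hp.1 (hj.2.1.1.trans hxt.le) hnd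
  exact hjℓ.not_ge (hℓ.trans (hp.le_of_pending hjt))

lemma exists_busy_serves (hE : E.GreedyValid) (hS : A.IsSchedule S)
    (hsucc : A.Successful S p.1) (hℓ : ℓ ≤ (p.2 : ℕ)) (h : E.DroppedEligible p t) :
    ∃ x ≤ t, E.Busy ℓ x ∧ (Serves S p.1 x ∨ Serves E.deliver p.1 (x - 1)) := by
  by_cases hall : ∀ x, A.a p.1 p.2 ≤ x → x ≤ t → E.Busy ℓ x
  · obtain ⟨x, hax, hxt, hserves⟩ := hE.exists_serves_of_droppedEligible hS hsucc h
    exact ⟨x, hxt, hall x hax hxt, .inl hserves⟩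
  · push Not at hall
    obtain ⟨y, hay, hyt, hy⟩ := hall
    obtain ⟨x, hyx, hxt, hx, hbusy⟩ := exists_last_not_of_le hyt hy ⟨p, hℓ, h.2⟩
    exact ⟨x + 1, hxt, hbusy _ x.lt_succ_self hxt,
      .inr (hE.serves_of_not_busy hℓ h.2 (hay.trans hyx) hxt hx hbusy)⟩

lemma ncard_adversaryLosses_le (hE : E.GreedyValid) (hS : A.IsSchedule S) (ℓ t : ℕ) :
    (E.adversaryLosses S ℓ t).ncard ≤ 2 * (E.busySlots ℓ t).ncard := by
  have ncard_served_le (R : ℕ → Option (Fin n × Fin k)) :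
      {f | ∃ x ∈ E.busySlots ℓ t, Serves R f x}.ncard ≤ (E.busySlots ℓ t).ncard :=
    ncard_le_ncard_of_leftUnique (Serves.leftUnique R) (E.finite_busySlots ℓ t) fun _ hf ↦ hf
  have hcharge : Prod.fst '' E.adversaryLosses S ℓ t ⊆
      {f | ∃ x ∈ E.busySlots ℓ t, Serves S f x} ∪
        {f | ∃ x ∈ E.busySlots ℓ t, Serves (fun y ↦ E.deliver (y - 1)) f x} := by
    rintro - ⟨p, ⟨hsucc, hℓ, s, hst, hp⟩, rfl⟩
    obtain ⟨x, hxs, hx, hserves⟩ := hE.exists_busy_serves hS hsucc hℓ hp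
    have hmem : x ∈ E.busySlots ℓ t := ⟨hxs.trans hst, hx⟩
    exact hserves.imp (fun h ↦ ⟨x, hmem, h⟩) fun h ↦ ⟨x, hmem, h⟩
  calc (E.adversaryLosses S ℓ t).ncard
      = (Prod.fst '' E.adversaryLosses S ℓ t).ncard :=
        (E.injOn_fst_adversaryLosses S ℓ t).ncard_image.symm
    _ ≤ _ := Set.ncard_le_ncard hcharge
    _ ≤ _ := Set.ncard_union_le _ _
    _ ≤ (E.busySlots ℓ t).ncard + (E.busySlots ℓ t).ncard :=
        add_le_add (ncard_served_le _) (ncard_served_le _)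
    _ = 2 * (E.busySlots ℓ t).ncard := (two_mul _).symm

end GreedyValid

end AlgExec

theorem greedy_adversary_drop_vs_delivered_general {n k d : ℕ} {A : ArrivalSeq n k d}
    {E : AlgExec A} (hE : E.GreedyValid) {S : ℕ → Option (Fin n × Fin k)}
    (hS : A.IsSchedule S) (ℓ t : ℕ) :
    Set.ncard {p : Fin n × Fin k | A.Successful S p.1 ∧ ℓ ≤ (p.2 : ℕ) ∧
        ∃ s' ≤ t, E.dropTime p = some s' ∧ ∃ s ≤ s', E.Eligible p s}
      ≤ 2 * Set.ncard {p : Fin n × Fin k | ℓ ≤ (p.2 : ℕ) ∧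
          ∃ s ≤ t, E.deliver s = some p} := by
  calc
    _ ≤ (E.adversaryLosses S ℓ t).ncard :=
      Set.ncard_le_ncard (by
        rintro p ⟨hsucc, hℓ, s', hs', hdrop, s, hs, hp⟩
        exact ⟨hsucc, hℓ, s', hs', hE.droppedEligible hdrop hs hp⟩)
    _ ≤ 2 * (E.busySlots ℓ t).ncard := hE.ncard_adversaryLosses_le hS ℓ t
    _ ≤ _ := Nat.mul_le_mul_left 2 (hE.ncard_busySlots_le ℓ t)

/-- In any execution of `Greedy` on a `d`-uniform arrival sequence
where the adversary's schedule `S` is feasible (with `O` the set of frames it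
delivers), for every index `ℓ` and every time `t` at which there is no eligible packet
of index at least `ℓ` in `Greedy`'s buffer: `Greedy` has by time `t` delivered at least
one packet of index at least `ℓ` for every two adversary packets (packets of frames of
`O`) of index at least `ℓ` that became eligible and were subsequently dropped by
`Greedy`. -/
theorem greedy_adversary_drop_vs_delivered (n k d : ℕ) (hkd : k ≤ d)
    (A : ArrivalSeq n k d) (E : AlgExec A) (hE : E.GreedyValid)
    (S : ℕ → Option (Fin n × Fin k)) (hS : A.IsSchedule S) :
    ∀ ℓ t : ℕ, (¬ ∃ p : Fin n × Fin k, ℓ ≤ (p.2 : ℕ) ∧ E.Eligible p t) →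
      Set.ncard {p : Fin n × Fin k | A.Successful S p.1 ∧ ℓ ≤ (p.2 : ℕ) ∧
          ∃ s' ≤ t, E.dropTime p = some s' ∧ ∃ s ≤ s', E.Eligible p s}
        ≤ 2 * Set.ncard {p : Fin n × Fin k | ℓ ≤ (p.2 : ℕ) ∧
            ∃ s ≤ t, E.deliver s = some p} :=
  fun ℓ t _ ↦ greedy_adversary_drop_vs_delivered_general hE hS ℓ t
end

section
/- In any execution of algorithm Greedy, under the mapping ψ every frame can be (re-)mapped at most k times, and every frame is eventually mapped to a frame in F_G (the set of frames completed by Greedy). -/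
/-!
Greedy serves each frame in index order, so once a packet `q` is delivered, any packet of its
frame that is dropped has a larger index than `q`. If `ψ` maps `f` via `q`, the first dropped
packet of `f` has index at most that of `q`. Hence the index of the first dropped packet strictly
increases along `ψ` until a completed frame is reached, and this index is always less than `k`.
-/

theorem exists_le_iterate_of_lt_apply {α : Type*} {g : α → α} {P : α → Prop} {r : α → ℕ} {k : ℕ}
    (hbound : ∀ x, ¬ P x → r x < k) (hincr : ∀ x, ¬ P x → ¬ P (g x) → r x < r (g x)) (x : α) :
    ∃ j ≤ k, P (g^[j] x) := by
  by_contra! hP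
  have le_rank : ∀ j ≤ k, j ≤ r (g^[j] x) := by
    intro j
    induction j with
    | zero => exact fun _ ↦ Nat.zero_le _
    | succ j ih =>
      intro hj
      have hP_succ := hP (j + 1) hj
      rw [Function.iterate_succ_apply'] at hP_succ ⊢
      exact (ih (by lia)).trans_lt (hincr _ (hP j (by lia)) hP_succ)
  exact (hbound _ (hP k le_rfl)).not_ge (le_rank k le_rfl)

namespace AlgExec

variable {n k d : ℕ} {A : ArrivalSeq n k d} {E : AlgExec A}

theorem Eligible.delivered_of_lt {f : Fin n} {ℓ j : Fin k} {t : ℕ} (h : E.Eligible (f, ℓ) t)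
    (hj : j < ℓ) : E.Delivered (f, j) := by
  obtain ⟨halive, hpending, hidx⟩ := h
  by_contra hnd
  have hj_unexpired : t ≤ A.a f j + d := by
    by_contra! hlt
    obtain ⟨s, -, hs⟩ := (halive j).2 hlt
    exact hnd ⟨s, hs⟩
  have hj_pending : E.Pending (f, j) t :=
    ⟨(A.mono f hj.le).trans hpending.1, hj_unexpired, fun ⟨s, _, hs⟩ ↦ hnd ⟨s, hs⟩, (halive j).1⟩
  have hidx_le : E.Iidx t f ≤ j := Nat.sInf_le ⟨j.2, hj_pending⟩
  exact hj.not_ge (Fin.le_def.2 (hidx ▸ hidx_le))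

theorem exists_dropTime_firstDropIdx_eq {f : Fin n} {ℓ : Fin k} {t : ℕ}
    (h : E.dropTime (f, ℓ) = some t) :
    ∃ hlt : E.firstDropIdx f < k,
      E.dropTime (f, ⟨E.firstDropIdx f, hlt⟩) = some (E.dropT f) := by
  obtain ⟨ℓ', hℓ'⟩ : ∃ ℓ' : Fin k, E.dropTime (f, ℓ') = some (E.dropT f) :=
    Nat.sInf_mem (s := {t | ∃ ℓ : Fin k, E.dropTime (f, ℓ) = some t}) ⟨t, ℓ, h⟩
  exact Nat.sInf_mem (s := {ℓ | ∃ h : ℓ < k, E.dropTime (f, ⟨ℓ, h⟩) = some (E.dropT f)})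
    ⟨ℓ', ℓ'.2, hℓ'⟩

namespace GreedyValid

theorem eligible_of_deliver (hE : E.GreedyValid) {p : Fin n × Fin k} {t : ℕ}
    (h : E.deliver t = some p) : E.Eligible p t :=
  let ⟨halive, hpending, hidx, _⟩ := hE.1 t p.1 p.2 h
  ⟨halive, hpending, hidx⟩

theorem delivered_of_le (hE : E.GreedyValid) {f : Fin n} {ℓ j : Fin k}
    (h : E.Delivered (f, ℓ)) (hj : j ≤ ℓ) : E.Delivered (f, j) := by
  rcases hj.eq_or_lt with rfl | hlt
  · exact h
  · obtain ⟨t, ht⟩ := h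
    exact (hE.eligible_of_deliver ht).delivered_of_lt hlt

theorem not_delivered_of_dropTime (hE : E.GreedyValid) {p : Fin n × Fin k} {s : ℕ}
    (h : E.dropTime p = some s) : ¬ E.Delivered p := by
  rintro ⟨t, ht⟩
  obtain ⟨⟨-, -, hnot_before, -⟩, hnot_now, -⟩ := (hE.2.2 p s).1 h
  obtain ⟨-, ⟨-, -, -, hnot_dropped⟩, -⟩ := hE.eligible_of_deliver ht
  rcases lt_trichotomy t s with hlt | rfl | hgt
  · exact hnot_before ⟨t, hlt, ht⟩
  · exact hnot_now ht
  · exact hnot_dropped ⟨s, hgt, h⟩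

theorem exists_dropTime_of_not_delivered (hE : E.GreedyValid) {p : Fin n × Fin k}
    (h : ¬ E.Delivered p) : ∃ t, E.dropTime p = some t := by
  by_cases hbefore : E.DroppedBefore p (A.a p.1 p.2 + d)
  · obtain ⟨s, -, hs⟩ := hbefore
    exact ⟨s, hs⟩
  · have hpending : E.Pending p (A.a p.1 p.2 + d) :=
      ⟨Nat.le_add_right _ _, le_rfl, fun ⟨s, _, hs⟩ ↦ h ⟨s, hs⟩, hbefore⟩
    exact ⟨_, (hE.2.2 _ _).2 ⟨hpending, fun hs ↦ h ⟨_, hs⟩, .inr (.inl rfl)⟩⟩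

theorem exists_not_delivered_firstDropIdx (hE : E.GreedyValid) {f : Fin n}
    (hf : ¬ E.Completed f) :
    ∃ hlt : E.firstDropIdx f < k, ¬ E.Delivered (f, ⟨E.firstDropIdx f, hlt⟩) := by
  obtain ⟨ℓ, hℓ⟩ := not_forall.1 hf
  obtain ⟨t, ht⟩ := hE.exists_dropTime_of_not_delivered hℓ
  obtain ⟨hlt, hdrop⟩ := exists_dropTime_firstDropIdx_eq ht
  exact ⟨hlt, hE.not_delivered_of_dropTime hdrop⟩

theorem lt_firstDropIdx_of_delivered (hE : E.GreedyValid) {f : Fin n} {ℓ : Fin k}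
    (hf : ¬ E.Completed f) (h : E.Delivered (f, ℓ)) : ℓ < E.firstDropIdx f := by
  obtain ⟨hlt, hnd⟩ := hE.exists_not_delivered_firstDropIdx hf
  by_contra! hle
  exact hnd (hE.delivered_of_le h (Fin.le_def.2 hle))

end GreedyValid

theorem PsiMapping.firstDropIdx_lt_firstDropIdx_next {O : Set (Fin n)} {b : ℕ}
    (M : PsiMapping E O b) (hE : E.GreedyValid) {f : Fin n} (hf : ¬ E.Completed f)
    (hnext : ¬ E.Completed (M.next f)) : E.firstDropIdx f < E.firstDropIdx (M.next f) := by
  obtain ⟨q, hq⟩ := M.mapsAll f hf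
  obtain ⟨hle, t, -, ht⟩ := M.viaValid f q hq
  have hnext_eq : M.next f = q.1 := by rw [PsiMapping.next, hq]
  rw [hnext_eq] at hnext ⊢
  exact hle.trans_lt (hE.lt_firstDropIdx_of_delivered hnext ⟨t, ht⟩)

end AlgExec

theorem greedy_remapping_length_general {n k d b : ℕ} {A : ArrivalSeq n k d}
    {E : AlgExec A} (hE : E.GreedyValid) {O : Set (Fin n)} (M : AlgExec.PsiMapping E O b)
    (f : Fin n) : ∃ j ≤ k, E.Completed (M.chain f j) :=
  exists_le_iterate_of_lt_apply (P := E.Completed) (r := E.firstDropIdx)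
    (fun _ hg ↦ (hE.exists_not_delivered_firstDropIdx hg).1)
    (fun _ ↦ M.firstDropIdx_lt_firstDropIdx_next hE) f

/-- In any execution of `Greedy`, under the mapping `ψ` (taken with
respect to the set `O` of frames of a fixed optimal schedule) every frame is
(re-)mapped at most `k` times, and every frame is eventually mapped to a frame of
`F_G`, the set of frames completed by `Greedy`. -/
theorem greedy_remapping_length (n k d b : ℕ) (hkd : k ≤ d)
    (A : ArrivalSeq n k d) (hburst : A.BurstBound b)
    (E : AlgExec A) (hE : E.GreedyValid)
    (S : ℕ → Option (Fin n × Fin k)) (hS : A.IsOptimal S)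
    (M : AlgExec.PsiMapping E {f : Fin n | A.Successful S f} b) :
    ∀ f : Fin n, ∃ j ≤ k, E.Completed (M.chain f j) := by
  exact greedy_remapping_length_general hE M
end
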